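/- arXiv:1508.04837 — 3 statements merged into one kernel-verified Lean document; each statement's English description precedes it below -/
import Mathlib

section
/- Let T be a nonempty finite set and let 𝒞 and 𝒟 be partitions of T. Then the subspaces U_𝒞 and U_𝒟 of ℝ^T are orthogonal if and only if the partitions 𝒞 and 𝒟 are independent. -/
/-- Independence of two subsets of a finite set `T`:  `|A ∩ B| · |T| = |A| · |B|`. -/
def indep {T : Type} [Fintype T] [DecidableEq T] (B C : Finset T) : Prop :=
  (B ∩ C).card * Fintype.card T = B.card * C.card

/-- `P` is a partition of the finite set `T`: its blocks are nonempty and every point of `T`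
lies in exactly one block. -/
def IsPartition {T : Type} [Fintype T] (P : Set (Finset T)) : Prop :=
  (∀ B ∈ P, B.Nonempty) ∧ ∀ x : T, ∃! B, B ∈ P ∧ x ∈ B

/-- `U_𝒞`: the subspace of `ℝ^T` of contrast functions determined by a partition `𝒞` of `T`,
i.e. the functions that are constant on each block of `𝒞` and whose values sum to zero. -/
def Usub {T : Type} [Fintype T] (P : Set (Finset T)) : Submodule ℝ (T → ℝ) where
  carrier := {u | (∀ B ∈ P, ∀ x ∈ B, ∀ y ∈ B, u x = u y) ∧ ∑ x, u x = 0}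
  add_mem' := by
    rintro u v ⟨hu1, hu2⟩ ⟨hv1, hv2⟩
    refine ⟨fun B hB x hx y hy => ?_, ?_⟩
    · simp only [Pi.add_apply, hu1 B hB x hx y hy, hv1 B hB x hx y hy]
    · simpa [Finset.sum_add_distrib] using by rw [hu2, hv2, add_zero]
  zero_mem' := ⟨fun B hB x hx y hy => rfl, by simp⟩
  smul_mem' := by
    rintro c u ⟨hu1, hu2⟩
    refine ⟨fun B hB x hx y hy => ?_, ?_⟩
    · simp only [Pi.smul_apply, hu1 B hB x hx y hy]
    · simp [← Finset.mul_sum, hu2]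

/-!
The projection of the indicator `1_A` onto the functions of sum zero is `1_A - |A| / |T|`, and the
inner product of two such projections is `|A ∩ B| - |A| |B| / |T|`, which vanishes exactly when
`A ⫫ B`. Since `U_𝒞` is spanned by the projected indicators of the blocks of `𝒞`, orthogonality
of `U_𝒞` and `U_𝒟` can be tested on blocks.
-/

section BilinearSpan

variable {R M N P : Type*} [CommSemiring R] [AddCommMonoid M] [AddCommMonoid N] [AddCommMonoid P]
  [Module R M] [Module R N] [Module R P]

theorem forall_mem_span_apply_eq_zero_iff (f : M →ₗ[R] N →ₗ[R] P) (s : Set M) (t : Set N) :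
    (∀ m ∈ Submodule.span R s, ∀ n ∈ Submodule.span R t, f m n = 0) ↔
      ∀ m ∈ s, ∀ n ∈ t, f m n = 0 := by
  simp only [← Submodule.mem_bot R, ← Submodule.map₂_le, Submodule.map₂_span_span,
    Submodule.span_le, Set.image2_subset_iff, SetLike.mem_coe]

end BilinearSpan

section CenteredIndicator

variable {T : Type*} [Fintype T] [DecidableEq T]

/-- The centered indicator `1_A - |A| / |T|` of `A`, i.e. the orthogonal projection of the indicator
function of `A` onto the functions on `T` whose values sum to zero. -/
noncomputable def centeredIndicator (A : Finset T) (x : T) : ℝ :=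
  (if x ∈ A then 1 else 0) - (A.card : ℝ) / Fintype.card T

theorem sum_centeredIndicator (A B : Finset T) :
    ∑ x ∈ B, centeredIndicator A x =
      ((A ∩ B).card : ℝ) - (A.card : ℝ) * B.card / Fintype.card T := by
  simp only [centeredIndicator, Finset.sum_sub_distrib, Finset.sum_ite_mem, Finset.sum_const,
    nsmul_eq_mul, mul_one, Finset.inter_comm B A]
  ring

theorem sum_univ_centeredIndicator [Nonempty T] (A : Finset T) :
    ∑ x, centeredIndicator A x = 0 := by
  simp [sum_centeredIndicator]

theorem centeredIndicator_dotProduct (A : Finset T) {v : T → ℝ} (hv : ∑ x, v x = 0) :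
    centeredIndicator A ⬝ᵥ v = ∑ x ∈ A, v x := by
  simp [dotProduct, centeredIndicator, sub_mul, ← Finset.mul_sum, hv]

end CenteredIndicator

theorem centeredIndicator_dotProduct_eq_zero_iff {T : Type} [Fintype T] [DecidableEq T]
    [Nonempty T] (A B : Finset T) :
    centeredIndicator A ⬝ᵥ centeredIndicator B = 0 ↔ indep A B := by
  have hT : (Fintype.card T : ℝ) ≠ 0 := Nat.cast_ne_zero.mpr Fintype.card_ne_zero
  rw [centeredIndicator_dotProduct A (sum_univ_centeredIndicator B), sum_centeredIndicator,
    sub_eq_zero, eq_div_iff hT, Finset.inter_comm, mul_comm (B.card : ℝ), indep]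
  norm_cast

namespace IsPartition

variable {T : Type} [Fintype T] {P : Set (Finset T)}

/-- The block of the partition `P` containing the point `x`. -/
noncomputable def block (hP : IsPartition P) (x : T) : Finset T :=
  (hP.2 x).choose

theorem block_mem (hP : IsPartition P) (x : T) : hP.block x ∈ P :=
  (hP.2 x).choose_spec.1.1

theorem mem_block_self (hP : IsPartition P) (x : T) : x ∈ hP.block x :=
  (hP.2 x).choose_spec.1.2

theorem mem_iff_block_eq (hP : IsPartition P) {B : Finset T} {x : T} (hB : B ∈ P) :
    x ∈ B ↔ hP.block x = B :=
  ⟨fun hx => ((hP.2 x).choose_spec.2 B ⟨hB, hx⟩).symm, fun h => h ▸ hP.mem_block_self x⟩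

theorem mem_block_iff (hP : IsPartition P) {x y : T} :
    x ∈ hP.block y ↔ hP.block x = hP.block y :=
  hP.mem_iff_block_eq (hP.block_mem y)

theorem mem_block_comm (hP : IsPartition P) {x y : T} : x ∈ hP.block y ↔ y ∈ hP.block x := by
  rw [hP.mem_block_iff, hP.mem_block_iff, eq_comm]

theorem apply_eq_of_mem_block (hP : IsPartition P) {u : T → ℝ} (hu : u ∈ Usub P) {x y : T}
    (hy : y ∈ hP.block x) : u y = u x :=
  hu.1 _ (hP.block_mem x) y hy x (hP.mem_block_self x)

variable [DecidableEq T]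

theorem centeredIndicator_mem_Usub [Nonempty T] (hP : IsPartition P) {A : Finset T} (hA : A ∈ P) :
    centeredIndicator A ∈ Usub P := by
  refine ⟨fun B hB x hx y hy => ?_, sum_univ_centeredIndicator A⟩
  have hxy : hP.block x = hP.block y :=
    ((hP.mem_iff_block_eq hB).mp hx).trans ((hP.mem_iff_block_eq hB).mp hy).symm
  simp only [centeredIndicator, hP.mem_iff_block_eq hA, hxy]

theorem eq_sum_smul_centeredIndicator (hP : IsPartition P) {u : T → ℝ} (hu : u ∈ Usub P) :
    u = ∑ y, (u y / (hP.block y).card) • centeredIndicator (hP.block y) := by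
  have card_ne_zero (y : T) : ((hP.block y).card : ℝ) ≠ 0 :=
    Nat.cast_ne_zero.mpr (Finset.card_ne_zero_of_mem (hP.mem_block_self y))
  funext x
  have indicator_part :
      ∑ y, u y / (hP.block y).card * (if x ∈ hP.block y then 1 else 0) = u x := by
    calc ∑ y, u y / (hP.block y).card * (if x ∈ hP.block y then 1 else 0)
        = ∑ y ∈ hP.block x, u y / (hP.block y).card := by
          simp only [hP.mem_block_comm (x := x), mul_ite, mul_one, mul_zero, Finset.sum_ite_mem,
            Finset.univ_inter]
      _ = ∑ _y ∈ hP.block x, u x / (hP.block x).card :=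
          Finset.sum_congr rfl fun y hy => by
            rw [hP.apply_eq_of_mem_block hu hy, hP.mem_block_iff.mp hy]
      _ = u x := by
          rw [Finset.sum_const, nsmul_eq_mul, mul_div_cancel₀ _ (card_ne_zero x)]
  have mean_part :
      ∑ y, u y / (hP.block y).card * ((hP.block y).card / (Fintype.card T : ℝ)) = 0 := by
    simp only [div_mul_div_cancel₀ (card_ne_zero _), ← Finset.sum_div, hu.2, zero_div]
  simp only [Finset.sum_apply, Pi.smul_apply, smul_eq_mul, centeredIndicator, mul_sub,
    Finset.sum_sub_distrib, indicator_part, mean_part, sub_zero]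

theorem Usub_eq_span [Nonempty T] (hP : IsPartition P) :
    Usub P = Submodule.span ℝ (centeredIndicator '' P) := by
  apply le_antisymm
  · intro u hu
    rw [hP.eq_sum_smul_centeredIndicator hu]
    exact Submodule.sum_mem _ fun y _ => Submodule.smul_mem _ _
      (Submodule.subset_span (Set.mem_image_of_mem _ (hP.block_mem y)))
  · rw [Submodule.span_le, Set.image_subset_iff]
    exact fun A hA => hP.centeredIndicator_mem_Usub hA

end IsPartition

/-- The subspaces `U_𝒞` and `U_𝒟` of `ℝ^T` are orthogonal if and only if the partitions
`𝒞` and `𝒟` are independent. -/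
theorem Usub_orthogonal_iff_indep {T : Type} [Fintype T] [DecidableEq T] [Nonempty T]
    (C D : Set (Finset T)) (hC : IsPartition C) (hD : IsPartition D) :
    (∀ u ∈ Usub C, ∀ v ∈ Usub D, ∑ x, u x * v x = 0) ↔
      ∀ B ∈ C, ∀ B' ∈ D, indep B B' := by
  calc (∀ u ∈ Usub C, ∀ v ∈ Usub D, ∑ x, u x * v x = 0)
      ↔ ∀ u ∈ centeredIndicator '' C, ∀ v ∈ centeredIndicator '' D, u ⬝ᵥ v = 0 := by
        rw [hC.Usub_eq_span, hD.Usub_eq_span]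
        exact forall_mem_span_apply_eq_zero_iff (dotProductBilin ℝ ℝ) _ _
    _ ↔ ∀ B ∈ C, ∀ B' ∈ D, indep B B' := by
        simp only [Set.forall_mem_image, centeredIndicator_dotProduct_eq_zero_iff]
end

section
/- Let T = A_1 × ⋯ × A_k be a full factorial design and S ⊆ T a simple fraction with maximum strength t (i.e., S has strength t but not strength t + 1). Then S has maximum resolution t + 1: S has resolution t + 1, and S does not have resolution t + 2. Concretely, there exist nonempty disjoint subsets I, J ⊆ {1,…,k} with |I| + |J| = t + 1 and functions u ∈ U_I, v ∈ U_J such that ∑_{s ∈ S} u(s)·v(s) ≠ 0. -/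
/-- The block of the partition `𝒞_I` of the full factorial design `T = ∏ i, A i`
determined by the values `r i` for `i ∈ I`:  `{x ∈ T : x i = r i for all i ∈ I}`. -/
def block {k : ℕ} (A : Fin k → Type) [∀ i, Fintype (A i)] [∀ i, DecidableEq (A i)]
    (I : Finset (Fin k)) (r : ∀ i, A i) : Finset (∀ i, A i) :=
  Finset.univ.filter fun x => ∀ i ∈ I, x i = r i

/-- The partition `𝒞_I` of the full factorial design, viewed as the set of its blocks. -/
def CI {k : ℕ} (A : Fin k → Type) [∀ i, Fintype (A i)] [∀ i, DecidableEq (A i)]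
    (I : Finset (Fin k)) : Set (Finset (∀ i, A i)) :=
  {B | ∃ r : ∀ i, A i, B = block A I r}

/-- A simple fraction `S ⊆ T` has strength `t ≥ 1` if `S` is independent of every block of
the partition `𝒞_I`, for every `I ⊆ {1,…,k}` with `|I| = t`. -/
def hasStrength {k : ℕ} (A : Fin k → Type) [∀ i, Fintype (A i)] [∀ i, DecidableEq (A i)]
    (S : Finset (∀ i, A i)) (t : ℕ) : Prop :=
  ∀ I : Finset (Fin k), I.card = t → ∀ B ∈ CI A I, indep S B

/-- The interaction subspace `U_I ⊆ ℝ^T`, defined inductively: `U_∅` is the space of constant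
functions, and for `I ≠ ∅`, `U_I` consists of the contrast functions in `U_{𝒞_I}` (functions
constant on each block of `𝒞_I` whose values sum to zero) that are orthogonal to `U_J` for
every `J ⊊ I`. -/
def UI {k : ℕ} (A : Fin k → Type) [∀ i, Fintype (A i)] [∀ i, DecidableEq (A i)] :
    Finset (Fin k) → Set ((∀ i, A i) → ℝ)
  | I =>
    if I = ∅ then {u | ∃ c : ℝ, u = fun _ => c}
    else
      {u | (∀ B ∈ CI A I, ∀ x ∈ B, ∀ y ∈ B, u x = u y) ∧ (∑ x, u x = 0) ∧
        ∀ J : Finset (Fin k), J ⊂ I → ∀ v ∈ UI A J, ∑ x, u x * v x = 0}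
  termination_by I => I.card
  decreasing_by exact Finset.card_lt_card (by assumption)

/-!
Write `n i` for the number of levels of factor `i` and `[P]` for the indicator of `P`. A function
lies in `U_I` exactly when it depends only on the coordinates in `I` and its sum along every
coordinate `i ∈ I` vanishes. In particular the contrasts `∏ i ∈ I, ([x i = r i] - 1 / n i)` lie in
`U_I`, and expanding `∏ i ∈ I, (([x i = r i] - 1 / n i) + 1 / n i)` writes the indicator of a block
of `𝒞_I` as a combination of contrasts on subsets `K ⊆ I`, with coefficient `1` at `K = I`.

Independence of `S` and `B` says that the linear functional `f ↦ |T| ∑_S f - |S| ∑_T f` kills the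
indicator of `B`, so strength `t` makes it kill every function of at most `t` coordinates. If `u v`
is such a function with `u ∈ U_I`, `v ∈ U_J` and `I ≠ J`, then `∑_S u v = 0` because
`∑_T u v = 0`. If strength `t + 1` fails at a block of `𝒞_K`, only the top term of the expansion
contributes, so the contrast on `K`, which factors as a contrast on `{a}` times one on `K \ {a}`,
has nonzero sum over `S`.
-/

open Finset Function

section SumAlong

variable {ι : Type*} [DecidableEq ι] {α : ι → Type*} [∀ i, Fintype (α i)]

/-- The sum of `f` along the line through `x` in direction `i`, as a function of `x`: up to the
factor `|α i|`, the conditional expectation of `f` given all coordinates other than `i`. -/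
def sumAlong {M : Type*} [AddCommMonoid M] (i : ι) (f : (∀ i, α i) → M) (x : ∀ i, α i) : M :=
  ∑ b, f (update x i b)

theorem sumAlong_of_dependsOn {M : Type*} [AddCommMonoid M] {s : Set ι} {f : (∀ i, α i) → M}
    (hf : DependsOn f s) {i : ι} (hi : i ∉ s) : sumAlong i f = Fintype.card (α i) • f := by
  funext x
  have hconst (b : α i) : f (update x i b) = f x :=
    hf fun j hj => update_of_ne (ne_of_mem_of_not_mem hj hi) _ _
  simp [sumAlong, hconst]

theorem dependsOn_sumAlong {M : Type*} [AddCommMonoid M] {s : Set ι} {f : (∀ i, α i) → M}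
    (hf : DependsOn f s) (i : ι) : DependsOn (sumAlong i f) (s \ {i}) := by
  intro x y hxy
  refine sum_congr rfl fun b _ => hf fun j hj => ?_
  rcases eq_or_ne j i with rfl | hji
  · simp
  · simp [hji, hxy j ⟨hj, hji⟩]

theorem sumAlong_prod {R : Type*} [CommSemiring R] {I : Finset ι} {i : ι} (hi : i ∈ I)
    (h : ∀ j, α j → R) (x : ∀ j, α j) :
    sumAlong i (fun y => ∏ j ∈ I, h j (y j)) x = (∑ b, h i b) * ∏ j ∈ I.erase i, h j (x j) := by
  rw [sumAlong, sum_mul]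
  refine sum_congr rfl fun b _ => ?_
  rw [← mul_prod_erase I _ hi, update_self]
  congr 1
  exact prod_congr rfl fun j hj => by rw [update_of_ne (ne_of_mem_erase hj)]

variable [Fintype ι]

theorem sumAlong_dotProduct {R : Type*} [NonUnitalNonAssocSemiring R] (i : ι)
    (f g : (∀ i, α i) → R) : sumAlong i f ⬝ᵥ g = f ⬝ᵥ sumAlong i g := by
  simp only [dotProduct, sumAlong, sum_mul, mul_sum, ← sum_product']
  -- Swapping `x i` with the summation variable is an involution exchanging the two sides.
  refine sum_nbij' (fun p => (update p.1 i p.2, p.1 i)) (fun p => (update p.1 i p.2, p.1 i))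
    ?_ ?_ ?_ ?_ ?_ <;> simp

theorem dotProduct_eq_zero_of_sumAlong_eq_zero {R : Type*} [Semiring R] [NoZeroDivisors R]
    [CharZero R] {i : ι} [Nonempty (α i)] {f g : (∀ i, α i) → R} {s : Set ι}
    (hf : sumAlong i f = 0) (hg : DependsOn g s) (hi : i ∉ s) : f ⬝ᵥ g = 0 := by
  have h : (Fintype.card (α i) : R) * (f ⬝ᵥ g) = 0 := by
    rw [← nsmul_eq_mul, ← dotProduct_smul, ← sumAlong_of_dependsOn hg hi, ← sumAlong_dotProduct, hf,
      zero_dotProduct]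
  exact (mul_eq_zero.1 h).resolve_left (Nat.cast_ne_zero.2 Fintype.card_ne_zero)

theorem sumAlong_eq_zero_of_dotProduct_self {R : Type*} [Ring R] [LinearOrder R]
    [IsStrictOrderedRing R] {i : ι} {f : (∀ i, α i) → R} (h : f ⬝ᵥ sumAlong i f = 0) :
    sumAlong i f = 0 := by
  have hi : i ∉ (Set.univ \ {i} : Set ι) := by simp
  rw [← dotProduct_self_eq_zero, sumAlong_dotProduct,
    sumAlong_of_dependsOn (dependsOn_sumAlong (dependsOn_univ f) i) hi, dotProduct_smul, h,
    smul_zero]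

end SumAlong

section IsInteraction

variable {ι : Type*} [DecidableEq ι] {α : ι → Type*} [∀ i, Fintype (α i)]

/-- The closed form of the interaction space `U_I` (see `mem_UI_iff`): functions of the coordinates
in `I` whose sum along each of these coordinates vanishes. -/
structure IsInteraction {M : Type*} [AddCommMonoid M] (I : Finset ι) (u : (∀ i, α i) → M) :
    Prop where
  dependsOn : DependsOn u I
  sumAlong_eq_zero : ∀ i ∈ I, sumAlong i u = 0

theorem isInteraction_empty_iff {M : Type*} [AddCommMonoid M] [∀ i, Nonempty (α i)]
    {u : (∀ i, α i) → M} : IsInteraction ∅ u ↔ ∃ c, u = fun _ => c := by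
  constructor
  · intro hu
    have hu' : DependsOn u ∅ := by simpa using hu.dependsOn
    exact ⟨u (Classical.arbitrary _), funext fun x => hu'.empty x _⟩
  · rintro ⟨c, rfl⟩
    exact ⟨fun _ _ _ => rfl, by simp⟩

theorem IsInteraction.dotProduct_eq_zero {R : Type*} [CommSemiring R] [NoZeroDivisors R]
    [CharZero R] [Fintype ι] [∀ i, Nonempty (α i)] {I J : Finset ι} {u v : (∀ i, α i) → R}
    (hu : IsInteraction I u) (hv : IsInteraction J v) (hIJ : I ≠ J) : u ⬝ᵥ v = 0 := by
  by_cases hsub : I ⊆ J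
  · obtain ⟨j, hjJ, hjI⟩ := exists_of_ssubset (hsub.ssubset_of_ne hIJ)
    rw [dotProduct_comm]
    exact dotProduct_eq_zero_of_sumAlong_eq_zero (hv.sumAlong_eq_zero j hjJ) hu.dependsOn
      (mt mem_coe.1 hjI)
  · obtain ⟨i, hiI, hiJ⟩ := not_subset.1 hsub
    exact dotProduct_eq_zero_of_sumAlong_eq_zero (hu.sumAlong_eq_zero i hiI) hv.dependsOn
      (mt mem_coe.1 hiJ)

theorem IsInteraction.sum_eq_zero {R : Type*} [CommSemiring R] [NoZeroDivisors R] [CharZero R]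
    [Fintype ι] [∀ i, Nonempty (α i)] {I : Finset ι} {u : (∀ i, α i) → R}
    (hu : IsInteraction I u) (hI : I.Nonempty) : ∑ x, u x = 0 := by
  rw [← dotProduct_one]
  exact hu.dotProduct_eq_zero (isInteraction_empty_iff.2 ⟨1, rfl⟩) hI.ne_empty

end IsInteraction

section Contrast

variable {ι : Type*} {α : ι → Type*} [∀ i, DecidableEq (α i)]

/-- The indicator of the block `{x | ∀ i ∈ I, x i = r i}` of the partition `𝒞_I`. -/
def blockIndicator {R : Type*} [Zero R] [One R] (I : Finset ι) (r x : ∀ i, α i) : R :=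
  if ∀ i ∈ I, x i = r i then 1 else 0

theorem sum_smul_blockIndicator {R : Type*} [NonAssocSemiring R] [Fintype ι] [DecidableEq ι]
    [∀ i, Fintype (α i)] {I : Finset ι} {f : (∀ i, α i) → R} (hf : DependsOn f I) (o : ∀ i, α i) :
    ∑ r with ∀ i ∉ I, r i = o i, f r • blockIndicator I r = f := by
  funext x
  -- `I.piecewise x o` is the representative of the block of `x` that agrees with `o` off `I`.
  rw [Finset.sum_apply, sum_eq_single (I.piecewise x o)]
  · have hx : f (I.piecewise x o) = f x := hf fun i hi => I.piecewise_eq_of_mem x o hi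
    simp +contextual [blockIndicator, hx]
  · intro r hr hne
    have hxr : ¬ ∀ i ∈ I, x i = r i := fun h => hne <| funext fun i => by
      by_cases hi : i ∈ I
      · simp [hi, h i hi]
      · simp [hi, (mem_filter.1 hr).2 i hi]
    simp [blockIndicator, hxr]
  · simp +contextual

variable [∀ i, Fintype (α i)] {𝕜 : Type*} [Field 𝕜]

/-- The product over `i ∈ I` of the centred indicators of the levels `r i`, the standard spanning
functions of the interaction space `U_I`. -/
def contrast (I : Finset ι) (r x : ∀ i, α i) : 𝕜 :=
  ∏ i ∈ I, ((if x i = r i then 1 else 0) - (Fintype.card (α i) : 𝕜)⁻¹)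

variable [DecidableEq ι]

theorem contrast_union {I J : Finset ι} (hIJ : Disjoint I J) (r x : ∀ i, α i) :
    (contrast (I ∪ J) r x : 𝕜) = contrast I r x * contrast J r x :=
  prod_union hIJ

theorem isInteraction_contrast [CharZero 𝕜] (I : Finset ι) (r : ∀ i, α i) :
    IsInteraction I (contrast I r : (∀ i, α i) → 𝕜) where
  dependsOn x y hxy := prod_congr rfl fun i hi => by rw [hxy i hi]
  sumAlong_eq_zero i hi := by
    have : Nonempty (α i) := ⟨r i⟩
    have hsum : ∑ b, ((if b = r i then 1 else 0) - (Fintype.card (α i) : 𝕜)⁻¹) = 0 := by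
      simp [sum_sub_distrib]
    funext x
    exact (sumAlong_prod hi
      (fun j b => (if b = r j then 1 else 0) - (Fintype.card (α j) : 𝕜)⁻¹) x).trans
      (by rw [hsum, zero_mul, Pi.zero_apply])

theorem blockIndicator_eq_sum_contrast (I : Finset ι) (r : ∀ i, α i) :
    (blockIndicator I r : (∀ i, α i) → 𝕜) =
      ∑ K ∈ I.powerset, (∏ i ∈ I \ K, (Fintype.card (α i) : 𝕜)⁻¹) • contrast K r := by
  funext x
  calc blockIndicator I r x
      = ∏ i ∈ I, (((if x i = r i then 1 else 0) - (Fintype.card (α i) : 𝕜)⁻¹) +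
          (Fintype.card (α i) : 𝕜)⁻¹) := by
        simp only [blockIndicator, sub_add_cancel, prod_ite_zero, prod_const_one]
    _ = _ := by
        simp only [prod_add, contrast, Finset.sum_apply, Pi.smul_apply, smul_eq_mul, mul_comm]

end Contrast

section Span

variable {ι : Type*} [DecidableEq ι] {α : ι → Type*} [∀ i, Fintype (α i)] [∀ i, Nonempty (α i)]
  {𝕜 : Type*} [Field 𝕜] [CharZero 𝕜]

theorem mem_span_isInteraction [Finite ι] {I : Finset ι} {f : (∀ i, α i) → 𝕜}
    (hf : DependsOn f I) : f ∈ Submodule.span 𝕜 {g | ∃ K ⊆ I, IsInteraction K g} := by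
  classical
  cases nonempty_fintype ι
  rw [← sum_smul_blockIndicator hf (Classical.arbitrary _)]
  refine Submodule.sum_mem _ fun r _ => Submodule.smul_mem _ _ ?_
  rw [blockIndicator_eq_sum_contrast]
  exact Submodule.sum_mem _ fun K hK => Submodule.smul_mem _ _ <|
    Submodule.subset_span ⟨K, mem_powerset.1 hK, isInteraction_contrast K r⟩

theorem dotProduct_eq_zero_of_forall_isInteraction [Fintype ι] {I : Finset ι}
    {u f : (∀ i, α i) → 𝕜} (hu : ∀ K ⊆ I, ∀ v, IsInteraction K v → u ⬝ᵥ v = 0)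
    (hf : DependsOn f I) : u ⬝ᵥ f = 0 := by
  replace hf := mem_span_isInteraction hf
  induction hf using Submodule.span_induction with
  | mem v hv =>
    obtain ⟨K, hKI, hv⟩ := hv
    exact hu K hKI v hv
  | zero => exact dotProduct_zero u
  | add f g _ _ hf hg => rw [dotProduct_add, hf, hg, add_zero]
  | smul c f _ hf => rw [dotProduct_smul, hf, smul_zero]

end Span

section Imbalance

variable {T : Type*} [Fintype T] {R : Type*} [CommRing R]

/-- The linear functional `f ↦ |T| ∑_{s ∈ S} f s - |S| ∑_{x ∈ T} f x`, which compares the averages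
of `f` over the fraction `S` and over the full design `T`, with denominators
cleared. -/
def imbalance (S : Finset T) : (T → R) →ₗ[R] R :=
  (Fintype.card T : R) • ∑ s ∈ S, LinearMap.proj s - (#S : R) • ∑ x, LinearMap.proj x

theorem imbalance_apply (S : Finset T) (f : T → R) :
    imbalance S f = Fintype.card T * ∑ s ∈ S, f s - #S * ∑ x, f x := by
  simp [imbalance]

theorem imbalance_eq_zero_iff_of_sum_eq_zero [NoZeroDivisors R] [CharZero R] [Nonempty T]
    {f : T → R} (hf : ∑ x, f x = 0) (S : Finset T) : imbalance S f = 0 ↔ ∑ s ∈ S, f s = 0 := by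
  simp [imbalance_apply, hf]

theorem imbalance_indicator_eq_zero_iff {T : Type} [Fintype T] [DecidableEq T] [CharZero R]
    (S B : Finset T) : imbalance S (fun x => if x ∈ B then (1 : R) else 0) = 0 ↔ indep S B := by
  rw [imbalance_apply, sub_eq_zero, indep, mul_comm, ← Nat.cast_inj (R := R)]
  simp

end Imbalance

section Design

variable {k : ℕ} {A : Fin k → Type} [∀ i, Fintype (A i)] [∀ i, DecidableEq (A i)]

theorem mem_block_iff {I : Finset (Fin k)} {r x : ∀ i, A i} :
    x ∈ block A I r ↔ ∀ i ∈ I, x i = r i := by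
  simp [block]

theorem blockIndicator_eq_ite_mem_block {R : Type*} [Zero R] [One R] (I : Finset (Fin k))
    (r : ∀ i, A i) : (blockIndicator I r : _ → R) = fun x => if x ∈ block A I r then 1 else 0 := by
  funext x
  simp [blockIndicator, mem_block_iff]

theorem dependsOn_iff_forall_mem_CI {β : Type*} {I : Finset (Fin k)} {u : (∀ i, A i) → β} :
    DependsOn u I ↔ ∀ B ∈ CI A I, ∀ x ∈ B, ∀ y ∈ B, u x = u y := by
  constructor
  · rintro hu B ⟨r, rfl⟩ x hx y hy
    rw [mem_block_iff] at hx hy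
    exact hu fun i hi => (hx i hi).trans (hy i hi).symm
  · intro h x y hxy
    exact h _ ⟨y, rfl⟩ x (mem_block_iff.2 hxy) y (mem_block_iff.2 fun _ _ => rfl)

theorem mem_UI_iff [∀ i, Nonempty (A i)] {I : Finset (Fin k)} {u : (∀ i, A i) → ℝ} :
    u ∈ UI A I ↔ IsInteraction I u := by
  induction I using Finset.strongInduction generalizing u with
  | H I ih =>
    rw [UI]
    split_ifs with hI
    · rw [hI]
      exact isInteraction_empty_iff.symm
    rw [Set.mem_ofPred_eq, ← dependsOn_iff_forall_mem_CI]
    constructor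
    · rintro ⟨hdep, -, horth⟩
      refine ⟨hdep, fun i hi => sumAlong_eq_zero_of_dotProduct_self ?_⟩
      have hdep_erase : DependsOn (sumAlong i u) (I.erase i) := by
        simpa using dependsOn_sumAlong hdep i
      refine dotProduct_eq_zero_of_forall_isInteraction (fun K hK v hv => ?_) hdep_erase
      have hKI : K ⊂ I := hK.trans_ssubset (erase_ssubset hi)
      exact horth K hKI v ((ih K hKI).2 hv)
    · exact fun hu => ⟨hu.dependsOn, hu.sum_eq_zero (nonempty_iff_ne_empty.2 hI),
        fun J hJ v hv => hu.dotProduct_eq_zero ((ih J hJ).1 hv) hJ.ne'⟩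

theorem hasStrength_iff_imbalance_blockIndicator {S : Finset (∀ i, A i)} {t : ℕ} :
    hasStrength A S t ↔
      ∀ I : Finset (Fin k), #I = t → ∀ r, imbalance S (blockIndicator I r : _ → ℝ) = 0 := by
  have hblock (I : Finset (Fin k)) (r : ∀ i, A i) :
      imbalance S (blockIndicator I r : _ → ℝ) = 0 ↔ indep S (block A I r) := by
    rw [blockIndicator_eq_ite_mem_block, imbalance_indicator_eq_zero_iff]
  simp [hasStrength, CI, hblock]

theorem imbalance_eq_zero_of_hasStrength {S : Finset (∀ i, A i)} {t : ℕ} (hS : hasStrength A S t)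
    (htk : t ≤ k) {I : Finset (Fin k)} (hI : #I ≤ t) {f : (∀ i, A i) → ℝ} (hf : DependsOn f I) :
    imbalance S f = 0 := by
  obtain ⟨K, hIK, hK⟩ := exists_superset_card_eq hI (by simpa using htk)
  rcases isEmpty_or_nonempty (∀ i, A i) with _ | ⟨⟨o⟩⟩
  · rw [Subsingleton.elim f 0, map_zero]
  rw [← sum_smul_blockIndicator (hf.mono (coe_subset.2 hIK)) o, map_sum]
  refine sum_eq_zero fun r _ => ?_
  rw [map_smul, hasStrength_iff_imbalance_blockIndicator.1 hS K hK r, smul_zero]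

theorem imbalance_blockIndicator_eq_imbalance_contrast {S : Finset (∀ i, A i)} {t : ℕ}
    (hS : hasStrength A S t) {I : Finset (Fin k)} (hI : #I = t + 1) (r : ∀ i, A i) :
    imbalance S (blockIndicator I r : _ → ℝ) = imbalance S (contrast I r) := by
  have htk : t ≤ k := by
    have := card_finset_fin_le I
    omega
  rw [blockIndicator_eq_sum_contrast, map_sum, sum_eq_single I]
  · simp
  · intro K hK hKI
    have hlt : #K < #I := card_lt_card ((mem_powerset.1 hK).ssubset_of_ne hKI)
    rw [map_smul, imbalance_eq_zero_of_hasStrength hS htk (by omega)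
      (isInteraction_contrast K r).dependsOn, smul_zero]
  · simp

theorem exists_sum_contrast_ne_zero [∀ i, Nonempty (A i)] {S : Finset (∀ i, A i)} {t : ℕ}
    (hS : hasStrength A S t) (hS' : ¬ hasStrength A S (t + 1)) :
    ∃ K : Finset (Fin k), #K = t + 1 ∧ ∃ r, ∑ s ∈ S, (contrast K r s : ℝ) ≠ 0 := by
  simp only [hasStrength_iff_imbalance_blockIndicator (t := t + 1), not_forall] at hS'
  obtain ⟨K, hK, r, hKr⟩ := hS'
  have hsum : ∑ x, (contrast K r x : ℝ) = 0 :=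
    (isInteraction_contrast K r).sum_eq_zero (card_pos.1 (by omega))
  rw [imbalance_blockIndicator_eq_imbalance_contrast hS hK,
    imbalance_eq_zero_iff_of_sum_eq_zero hsum] at hKr
  exact ⟨K, hK, r, hKr⟩

theorem sum_mul_eq_zero_of_hasStrength [∀ i, Nonempty (A i)] {S : Finset (∀ i, A i)} {t : ℕ}
    (hS : hasStrength A S t) (htk : t ≤ k) {I J : Finset (Fin k)} (hIJ : I ≠ J)
    (hcard : #I + #J ≤ t) {u v : (∀ i, A i) → ℝ} (hu : IsInteraction I u)
    (hv : IsInteraction J v) : ∑ s ∈ S, u s * v s = 0 := by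
  rw [← imbalance_eq_zero_iff_of_sum_eq_zero (hu.dotProduct_eq_zero hv hIJ)]
  refine imbalance_eq_zero_of_hasStrength hS htk ((card_union_le I J).trans hcard) fun x y hxy => ?_
  rw [hu.dependsOn fun i hi => hxy i (mem_union_left J hi),
    hv.dependsOn fun i hi => hxy i (mem_union_right I hi)]

end Design

/-- If a simple fraction `S` has maximum strength `t` (strength `t` but not strength `t+1`),
then `S` has maximum resolution `t + 1`: it has resolution `t + 1` (all `I ≠ J` with
`|I| + |J| ≤ t` have `Û_I ⊥ Û_J`), and it does not have resolution `t + 2`: there are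
nonempty disjoint `I, J` with `|I| + |J| = t + 1` and `u ∈ U_I`, `v ∈ U_J` whose
restrictions to `S` are not orthogonal. -/
theorem max_strength_max_resolution {k : ℕ} (hk : 1 ≤ k) (A : Fin k → Type)
    [∀ i, Fintype (A i)] [∀ i, DecidableEq (A i)] [∀ i, Nonempty (A i)]
    (S : Finset (∀ i, A i)) (t : ℕ) (ht : 1 ≤ t)
    (h1 : hasStrength A S t) (h2 : ¬ hasStrength A S (t + 1)) :
    (∀ I J : Finset (Fin k), I ≠ J → I.card + J.card ≤ t →
        ∀ u ∈ UI A I, ∀ v ∈ UI A J, ∑ s ∈ S, u s * v s = 0) ∧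
      ∃ I J : Finset (Fin k), I.Nonempty ∧ J.Nonempty ∧ Disjoint I J ∧
        I.card + J.card = t + 1 ∧
        ∃ u ∈ UI A I, ∃ v ∈ UI A J, ∑ s ∈ S, u s * v s ≠ 0 := by
  obtain ⟨K, hK, r, hKr⟩ := exists_sum_contrast_ne_zero h1 h2
  have htk : t ≤ k := by
    have := card_finset_fin_le K
    omega
  refine ⟨fun I J hIJ hcard u hu v hv =>
    sum_mul_eq_zero_of_hasStrength h1 htk hIJ hcard (mem_UI_iff.1 hu) (mem_UI_iff.1 hv), ?_⟩
  obtain ⟨a, ha⟩ : K.Nonempty := card_pos.1 (by omega)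
  have hdisj : Disjoint {a} (K.erase a) := by simp
  have hcard : #(K.erase a) = t := by rw [card_erase_of_mem ha, hK, Nat.add_sub_cancel]
  have hK_split : {a} ∪ K.erase a = K := insert_erase ha
  refine ⟨{a}, K.erase a, singleton_nonempty a, card_pos.1 (by omega), hdisj, ?_,
    contrast {a} r, mem_UI_iff.2 (isInteraction_contrast _ r),
    contrast (K.erase a) r, mem_UI_iff.2 (isInteraction_contrast _ r), ?_⟩
  · rw [card_singleton, hcard, add_comm]
  · simpa only [← contrast_union hdisj, hK_split] using hKr
end

section
/- Let T = A_1 × ⋯ × A_k be a full factorial design and I ⊆ {1,…,k}. The interaction subspaces U_J for J ⊆ I are pairwise orthogonal in ℝ^T, and their (internal) direct sum equals the subspace of all functions in ℝ^T that are constant on each block of the partition 𝒞_I. -/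
/-!
For each coordinate `i`, averaging over the `i`-th coordinate is a projection `E i` of `ℝ^T` which
is self-adjoint for the standard inner product, and these projections commute. Let `W_I` be the
space of functions of the coordinates in `I` which are killed by `E i` for every `i ∈ I`. If
`i ∈ I \ J`, then `E i` kills `W_I` and fixes `W_J`, so these two are orthogonal. Splitting a
function `u` of the coordinates in `I` as `u = (u - E i u) + E i u`, successively for all `i ∈ I`,
writes it as an element of `W_I` plus functions of fewer coordinates, so by induction `u` lies in
the sum of the `W_J` with `J ⊆ I`. Finally `U_I = W_I`: if `u` is a function of the coordinates in
`I` orthogonal to `W_J` for all `J ⊂ I`, then `u` is orthogonal to `E i u` for `i ∈ I`, and so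
`⟨E i u, E i u⟩ = ⟨u, E i u⟩ = 0`.
-/

open Finset Function
open scoped BigOperators

section CoordAvg

variable {ι 𝕜 : Type*} {A : ι → Type*} [DecidableEq ι] [Semifield 𝕜] [CharZero 𝕜]

/-- The averaging operator over the `i`-th coordinate, acting on functions on a product; it is the
zero map when `A i` is empty. -/
def coordAvg (i : ι) [Fintype (A i)] : ((∀ j, A j) → 𝕜) →ₗ[𝕜] ((∀ j, A j) → 𝕜) where
  toFun u x := 𝔼 a, u (update x i a)
  map_add' _ _ := funext fun _ => expect_add_distrib _ _ _
  map_smul' _ _ := funext fun _ => (mul_expect _ _ _).symm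

lemma coordAvg_apply (i : ι) [Fintype (A i)] (u : (∀ j, A j) → 𝕜) (x : ∀ j, A j) :
    coordAvg i u x = 𝔼 a, u (update x i a) :=
  rfl

lemma dependsOn_coordAvg {u : (∀ j, A j) → 𝕜} {s : Set ι} (hu : DependsOn u s) (i : ι)
    [Fintype (A i)] : DependsOn (coordAvg i u) (s \ {i}) := by
  intro x y hxy
  refine expect_congr rfl fun a _ => hu fun j hj => ?_
  obtain rfl | hji := eq_or_ne j i
  · simp only [update_self]
  · simpa only [update_of_ne hji] using hxy j ⟨hj, hji⟩

lemma coordAvg_eq_self {u : (∀ j, A j) → 𝕜} {s : Set ι} (hu : DependsOn u s) {i : ι}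
    [Fintype (A i)] [Nonempty (A i)] (hi : i ∉ s) : coordAvg i u = u := by
  funext x
  have hconst : ∀ a, u (update x i a) = u x := fun a =>
    hu fun j hj => update_of_ne (ne_of_mem_of_not_mem hj hi) a x
  simp only [coordAvg_apply, hconst, expect_const univ_nonempty]

lemma coordAvg_coordAvg_self (i : ι) [Fintype (A i)] [Nonempty (A i)] (u : (∀ j, A j) → 𝕜) :
    coordAvg i (coordAvg i u) = coordAvg i u :=
  coordAvg_eq_self (dependsOn_coordAvg (dependsOn_univ u) i) fun h => h.2 rfl

lemma coordAvg_comm (i j : ι) [Fintype (A i)] [Fintype (A j)] (u : (∀ l, A l) → 𝕜) :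
    coordAvg i (coordAvg j u) = coordAvg j (coordAvg i u) := by
  obtain rfl | hij := eq_or_ne i j
  · congr!
  · funext x
    simp only [coordAvg_apply, update_comm hij]
    exact expect_comm _ _ _

lemma coordAvg_dotProduct [Fintype ι] [∀ j, Fintype (A j)] (i : ι) (u v : (∀ j, A j) → 𝕜) :
    coordAvg i u ⬝ᵥ v = u ⬝ᵥ coordAvg i v := by
  have hswap : ∑ x, ∑ a, u (update x i a) * v x = ∑ x, ∑ a, u x * v (update x i a) := by
    -- Exchanging `x i` and `a` is an involution of the pairs `(x, a)`.
    rw [← Fintype.sum_prod_type', ← Fintype.sum_prod_type']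
    refine sum_nbij' (fun p => (update p.1 i p.2, p.1 i)) (fun p => (update p.1 i p.2, p.1 i))
      ?_ ?_ ?_ ?_ ?_ <;> simp
  simp only [dotProduct, coordAvg_apply, expect_mul, mul_expect]
  simp only [expect, ← smul_sum, hswap]

end CoordAvg

section DependsOnSubmodule

variable {ι 𝕜 : Type*} {A : ι → Type*} [Semiring 𝕜]

variable (𝕜 A) in
/-- The space of functions on a product which depend only on the coordinates in `s`. -/
def dependsOnSubmodule (s : Set ι) : Submodule 𝕜 ((∀ i, A i) → 𝕜) where
  carrier := {u | DependsOn u s}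
  add_mem' hu hv _ _ hxy := congrArg₂ (· + ·) (hu hxy) (hv hxy)
  zero_mem' _ _ _ := rfl
  smul_mem' c _ hu _ _ hxy := congrArg (c * ·) (hu hxy)

lemma mem_dependsOnSubmodule {s : Set ι} {u : (∀ i, A i) → 𝕜} :
    u ∈ dependsOnSubmodule 𝕜 A s ↔ DependsOn u s :=
  Iff.rfl

lemma dependsOnSubmodule_mono {s t : Set ι} (hst : s ⊆ t) :
    dependsOnSubmodule 𝕜 A s ≤ dependsOnSubmodule 𝕜 A t :=
  fun _ => DependsOn.mono hst

end DependsOnSubmodule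

section InteractionSubmodule

variable {ι 𝕜 : Type*} {A : ι → Type*} [DecidableEq ι] [Field 𝕜] [CharZero 𝕜] [∀ i, Fintype (A i)]

variable (𝕜 A) in
/-- The interaction subspace `U_I`, described without recursion (`W_I` above): the functions of the
coordinates in `I` whose average over any one of these coordinates vanishes. -/
def interactionSubmodule (I : Finset ι) : Submodule 𝕜 ((∀ i, A i) → 𝕜) :=
  dependsOnSubmodule 𝕜 A I ⊓ ⨅ i ∈ I, LinearMap.ker (coordAvg i)

lemma mem_interactionSubmodule {I : Finset ι} {u : (∀ i, A i) → 𝕜} :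
    u ∈ interactionSubmodule 𝕜 A I ↔ DependsOn u I ∧ ∀ i ∈ I, coordAvg i u = 0 := by
  simp only [interactionSubmodule, Submodule.mem_inf, mem_dependsOnSubmodule, Submodule.mem_iInf,
    LinearMap.mem_ker]

lemma interactionSubmodule_le_dependsOnSubmodule (I : Finset ι) :
    interactionSubmodule 𝕜 A I ≤ dependsOnSubmodule 𝕜 A I :=
  inf_le_left

lemma mem_interactionSubmodule_empty [Nonempty (∀ i, A i)] {u : (∀ i, A i) → 𝕜} :
    u ∈ interactionSubmodule 𝕜 A ∅ ↔ ∃ c, u = fun _ => c := by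
  rw [mem_interactionSubmodule, coe_empty]
  constructor
  · rintro ⟨hu, -⟩
    exact ⟨u (Classical.arbitrary _), funext fun _ => hu.empty _ _⟩
  · rintro ⟨c, rfl⟩
    exact ⟨dependsOn_const _, by simp⟩

variable [∀ i, Nonempty (A i)]

lemma dotProduct_eq_zero_of_dependsOn [Fintype ι] {I : Finset ι} {s : Set ι}
    (hIs : ¬ (I : Set ι) ⊆ s) {u v : (∀ i, A i) → 𝕜} (hu : u ∈ interactionSubmodule 𝕜 A I)
    (hv : DependsOn v s) : u ⬝ᵥ v = 0 := by
  obtain ⟨i, hiI, his⟩ := Set.not_subset.1 hIs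
  calc u ⬝ᵥ v = u ⬝ᵥ coordAvg i v := by rw [coordAvg_eq_self hv his]
    _ = coordAvg i u ⬝ᵥ v := (coordAvg_dotProduct i u v).symm
    _ = 0 := by rw [(mem_interactionSubmodule.1 hu).2 i hiI, zero_dotProduct]

lemma dotProduct_eq_zero_of_mem_interactionSubmodule [Fintype ι] {I J : Finset ι} (hIJ : I ≠ J)
    {u v : (∀ i, A i) → 𝕜} (hu : u ∈ interactionSubmodule 𝕜 A I)
    (hv : v ∈ interactionSubmodule 𝕜 A J) : u ⬝ᵥ v = 0 := by
  by_cases hsub : I ⊆ J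
  · rw [dotProduct_comm]
    exact dotProduct_eq_zero_of_dependsOn (mod_cast fun h => hIJ (hsub.antisymm h)) hv
      (interactionSubmodule_le_dependsOnSubmodule I hu)
  · exact dotProduct_eq_zero_of_dependsOn (mod_cast hsub) hu
      (interactionSubmodule_le_dependsOnSubmodule J hv)

lemma dependsOnSubmodule_le_inf_ker_sup_iSup (s : Set ι) (K : Finset ι) :
    dependsOnSubmodule 𝕜 A s ≤
      (dependsOnSubmodule 𝕜 A s ⊓ ⨅ i ∈ K, LinearMap.ker (coordAvg i)) ⊔
        ⨆ i ∈ K, dependsOnSubmodule 𝕜 A (s \ {i}) := by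
  induction K using Finset.induction_on with
  | empty => simp
  | insert i K _ ih =>
    rw [Finset.iInf_insert, Finset.iSup_insert]
    refine ih.trans (sup_le (fun u hu => ?_) (le_sup_of_le_right le_sup_right))
    simp only [Submodule.mem_inf, Submodule.mem_iInf, LinearMap.mem_ker] at hu
    obtain ⟨hus, huK⟩ := hu
    have havg : coordAvg i u ∈ dependsOnSubmodule 𝕜 A (s \ {i}) := dependsOn_coordAvg hus i
    have hsub : u - coordAvg i u ∈ dependsOnSubmodule 𝕜 A s :=
      sub_mem hus (dependsOnSubmodule_mono Set.sdiff_subset havg)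
    have hker_self : coordAvg i (u - coordAvg i u) = 0 := by
      rw [map_sub, coordAvg_coordAvg_self, sub_self]
    have hker_of_mem : ∀ j ∈ K, coordAvg j (u - coordAvg i u) = 0 := fun j hj => by
      rw [map_sub, coordAvg_comm, huK j hj, map_zero, sub_zero]
    rw [← sub_add_cancel u (coordAvg i u)]
    refine add_mem (Submodule.mem_sup_left ?_)
      (Submodule.mem_sup_right (Submodule.mem_sup_left havg))
    simp only [Submodule.mem_inf, Submodule.mem_iInf, LinearMap.mem_ker]
    exact ⟨hsub, hker_self, hker_of_mem⟩

theorem iSup_powerset_interactionSubmodule (I : Finset ι) :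
    ⨆ J ∈ I.powerset, interactionSubmodule 𝕜 A J = dependsOnSubmodule 𝕜 A I := by
  refine le_antisymm (iSup₂_le fun J hJ => ?_) ?_
  · exact (interactionSubmodule_le_dependsOnSubmodule J).trans
      (dependsOnSubmodule_mono (mod_cast mem_powerset.1 hJ))
  induction I using Finset.strongInduction with
  | H I ih =>
    refine (dependsOnSubmodule_le_inf_ker_sup_iSup (I : Set ι) I).trans
      (sup_le ?_ (iSup₂_le fun i hi => ?_))
    · exact le_biSup (interactionSubmodule 𝕜 A) (mem_powerset_self I)
    · rw [← coe_erase]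
      exact (ih _ (erase_ssubset hi)).trans
        (biSup_mono fun J hJ => powerset_mono.2 (erase_subset i I) hJ)

end InteractionSubmodule

theorem mem_interactionSubmodule_iff_dotProduct {ι 𝕜 : Type*} {A : ι → Type*} [Fintype ι]
    [DecidableEq ι] [Field 𝕜] [LinearOrder 𝕜] [IsStrictOrderedRing 𝕜] [∀ i, Fintype (A i)]
    [∀ i, Nonempty (A i)] {I : Finset ι} {u : (∀ i, A i) → 𝕜} :
    u ∈ interactionSubmodule 𝕜 A I ↔
      DependsOn u I ∧ ∀ J ⊂ I, ∀ v ∈ interactionSubmodule 𝕜 A J, u ⬝ᵥ v = 0 := by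
  constructor
  · exact fun hu => ⟨interactionSubmodule_le_dependsOnSubmodule I hu, fun J hJ v hv =>
      dotProduct_eq_zero_of_mem_interactionSubmodule hJ.ne' hu hv⟩
  · rintro ⟨hu, horth⟩
    refine mem_interactionSubmodule.2 ⟨hu, fun i hi => ?_⟩
    have hle : dependsOnSubmodule 𝕜 A (I.erase i) ≤ LinearMap.ker (dotProductBilin 𝕜 𝕜 u) := by
      rw [← iSup_powerset_interactionSubmodule]
      exact iSup₂_le fun J hJ v hv =>
        horth J ((mem_powerset.1 hJ).trans_ssubset (erase_ssubset hi)) v hv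
    have havg : coordAvg i u ∈ dependsOnSubmodule 𝕜 A (I.erase i) := by
      rw [coe_erase]
      exact dependsOn_coordAvg hu i
    refine dotProduct_self_eq_zero.1 ?_
    calc coordAvg i u ⬝ᵥ coordAvg i u = u ⬝ᵥ coordAvg i (coordAvg i u) := coordAvg_dotProduct i _ _
      _ = u ⬝ᵥ coordAvg i u := by rw [coordAvg_coordAvg_self]
      _ = 0 := hle havg

section FactorialDesign

variable {k : ℕ} {A : Fin k → Type} [∀ i, Fintype (A i)] [∀ i, DecidableEq (A i)]

lemma forall_mem_CI_iff_dependsOn {β : Type*} {I : Finset (Fin k)} {u : (∀ i, A i) → β} :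
    (∀ B ∈ CI A I, ∀ x ∈ B, ∀ y ∈ B, u x = u y) ↔ DependsOn u I := by
  constructor
  · intro hu x y hxy
    exact hu (block A I y) ⟨y, rfl⟩ x (by simpa [block] using hxy) y (by simp [block])
  · rintro hu _ ⟨r, rfl⟩ x hx y hy
    simp only [block, mem_filter, mem_univ, true_and] at hx hy
    exact hu fun i hi => (hx i hi).trans (hy i hi).symm

theorem UI_eq_interactionSubmodule [∀ i, Nonempty (A i)] (I : Finset (Fin k)) :
    UI A I = interactionSubmodule ℝ A I := by
  induction I using Finset.strongInduction with
  | H I ih =>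
    ext u
    rw [UI]
    split_ifs with hI
    · subst hI
      exact mem_interactionSubmodule_empty.symm
    · have horth : (∀ J ⊂ I, ∀ v ∈ UI A J, u ⬝ᵥ v = 0) ↔
          ∀ J ⊂ I, ∀ v ∈ interactionSubmodule ℝ A J, u ⬝ᵥ v = 0 :=
        forall₂_congr fun J hJ => by rw [ih J hJ]; rfl
      have hsum : u ∈ interactionSubmodule ℝ A I → ∑ x, u x = 0 := fun hu => by
        rw [← dotProduct_one]
        exact dotProduct_eq_zero_of_mem_interactionSubmodule hI hu
          (mem_interactionSubmodule_empty.2 ⟨1, rfl⟩)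
      have hmem := mem_interactionSubmodule_iff_dotProduct (I := I) (u := u)
      rw [← horth, ← forall_mem_CI_iff_dependsOn] at hmem
      rw [SetLike.mem_coe]
      exact ⟨fun hu => hmem.2 ⟨hu.1, hu.2.2⟩,
        fun hu => ⟨(hmem.1 hu).1, hsum hu, (hmem.1 hu).2⟩⟩

end FactorialDesign

/-- The interaction subspaces `U_J`, `J ⊆ I`, are pairwise orthogonal in `ℝ^T`, and their
internal direct sum is the subspace of all functions in `ℝ^T` that are constant on each block
of the partition `𝒞_I`: a function `f` is constant on each block of `𝒞_I` iff it decomposes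
as `f = ∑_{J ⊆ I} g_J` with `g_J ∈ U_J` for every `J ⊆ I`. -/
theorem interaction_decomposition {k : ℕ} (hk : 1 ≤ k) (A : Fin k → Type)
    [∀ i, Fintype (A i)] [∀ i, DecidableEq (A i)] [∀ i, Nonempty (A i)]
    (I : Finset (Fin k)) :
    (∀ J₁ ∈ I.powerset, ∀ J₂ ∈ I.powerset, J₁ ≠ J₂ →
        ∀ u ∈ UI A J₁, ∀ v ∈ UI A J₂, ∑ x, u x * v x = 0) ∧
      ∀ f : (∀ i, A i) → ℝ,
        (∀ B ∈ CI A I, ∀ x ∈ B, ∀ y ∈ B, f x = f y) ↔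
          ∃ g : Finset (Fin k) → ((∀ i, A i) → ℝ),
            (∀ J ∈ I.powerset, g J ∈ UI A J) ∧
            f = fun x => ∑ J ∈ I.powerset, g J x := by
  simp only [UI_eq_interactionSubmodule, SetLike.mem_coe]
  refine ⟨fun J₁ _ J₂ _ hne u hu v hv =>
    dotProduct_eq_zero_of_mem_interactionSubmodule hne hu hv, fun f => ?_⟩
  rw [forall_mem_CI_iff_dependsOn, ← mem_dependsOnSubmodule, ← iSup_powerset_interactionSubmodule]
  constructor
  · intro hf
    obtain ⟨g, hg⟩ := (Submodule.mem_iSup_finset_iff_exists_sum _ _).1 hf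
    exact ⟨fun J => g J, fun J _ => (g J).2, by rw [← hg]; ext x; exact Finset.sum_apply ..⟩
  · rintro ⟨g, hg, rfl⟩
    rw [← Finset.sum_fn]
    exact Submodule.sum_mem_biSup hg
end
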